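/- Let r ≥ 1 and m = 2r + 1. Let U₁ = diag(I_{2r−2}, X₁) and U₂ = diag(I_{2r−2}, X₂) in GL(2r+1, ℂ), where X₁ = [[1,−1,1],[0,1,0],[0,2,−1]] and X₂ = [[1,1,−2],[0,1,0],[0,1,−1]] are 3×3 matrices. Then there is no M ∈ GL(2r+1, ℂ) such that M commutes with A_i and B_i for all 1 ≤ i ≤ r, M commutes with C_j for all 1 ≤ j ≤ r − 1, and M U₂ M⁻¹ = U₁. -/

import Mathlib

/-- `Amat m i = diag(I_{2i-2}, V, I_{m-2i})` where `V = [[1,1],[0,1]]`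
(indices `1 ≤ i`, `2i ≤ m`; the `V`-block occupies rows/columns `2i-2, 2i-1` in
0-based indexing). -/
def Amat (m i : ℕ) : Matrix (Fin m) (Fin m) ℂ :=
  Matrix.of fun p q =>
    if p = q then 1 else if (p : ℕ) = 2 * i - 2 ∧ (q : ℕ) = 2 * i - 1 then 1 else 0

/-- `Bmat m i = diag(I_{2i-2}, V̂, I_{m-2i})` where `V̂ = [[1,0],[-1,1]]`. -/
def Bmat (m i : ℕ) : Matrix (Fin m) (Fin m) ℂ :=
  Matrix.of fun p q =>
    if p = q then 1 else if (p : ℕ) = 2 * i - 1 ∧ (q : ℕ) = 2 * i - 2 then -1 else 0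

/-- `Cmat m j = diag(I_{2j-2}, W, I_{m-2-2j})` where
`W = [[1,1,0,-1],[0,1,0,0],[0,-1,1,1],[0,0,0,1]]` (the `W`-block occupies
rows/columns `2j-2, …, 2j+1` in 0-based indexing). -/
def Cmat (m j : ℕ) : Matrix (Fin m) (Fin m) ℂ :=
  Matrix.of fun p q =>
    if p = q then 1 else
    if (p : ℕ) = 2 * j - 2 ∧ (q : ℕ) = 2 * j - 1 then 1 else
    if (p : ℕ) = 2 * j - 2 ∧ (q : ℕ) = 2 * j + 1 then -1 else
    if (p : ℕ) = 2 * j ∧ (q : ℕ) = 2 * j - 1 then -1 else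
    if (p : ℕ) = 2 * j ∧ (q : ℕ) = 2 * j + 1 then 1 else 0


/-- `U₁ = diag(I_{2r-2}, X₁)` with `X₁ = [[1,-1,1],[0,1,0],[0,2,-1]]`,
as a `(2r+1) × (2r+1)` complex matrix. -/
def U1mat (r : ℕ) : Matrix (Fin (2 * r + 1)) (Fin (2 * r + 1)) ℂ :=
  Matrix.of fun p q =>
    if (p : ℕ) = 2 * r - 2 ∧ (q : ℕ) = 2 * r - 1 then -1 else
    if (p : ℕ) = 2 * r - 2 ∧ (q : ℕ) = 2 * r then 1 else
    if (p : ℕ) = 2 * r ∧ (q : ℕ) = 2 * r - 1 then 2 else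
    if (p : ℕ) = 2 * r ∧ (q : ℕ) = 2 * r then -1 else
    if p = q then 1 else 0

/-- `U₂ = diag(I_{2r-2}, X₂)` with `X₂ = [[1,1,-2],[0,1,0],[0,1,-1]]`,
as a `(2r+1) × (2r+1)` complex matrix. -/
def U2mat (r : ℕ) : Matrix (Fin (2 * r + 1)) (Fin (2 * r + 1)) ℂ :=
  Matrix.of fun p q =>
    if (p : ℕ) = 2 * r - 2 ∧ (q : ℕ) = 2 * r - 1 then 1 else
    if (p : ℕ) = 2 * r - 2 ∧ (q : ℕ) = 2 * r then -2 else
    if (p : ℕ) = 2 * r ∧ (q : ℕ) = 2 * r - 1 then 1 else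
    if (p : ℕ) = 2 * r ∧ (q : ℕ) = 2 * r then -1 else
    if p = q then 1 else 0

/-! In 0-based indices, `B_r = 1 - E` for the matrix unit `E` in position `(2r-1, 2r-2)`, so an `M`
commuting with `B_r` commutes with `E`. Since `E * N * E = N (2r-2) (2r-1) • E`, conjugation by such
an invertible `M` cannot change the entry `(2r-2, 2r-1)` of `N`, which is `1` for `U₂` and `-1` for
`U₁`. -/

section MatrixUnit

variable {n R : Type*} [DecidableEq n] [Fintype n] {i j : n} {c : R}

theorem commute_transvection_iff [CommRing R] {M : Matrix n n R} :
    Commute M (Matrix.transvection i j c) ↔ Commute M (Matrix.single i j c) := by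
  refine ⟨fun h => ?_, (Commute.one_right M).add_right⟩
  simpa only [Matrix.transvection, add_sub_cancel_left] using h.sub_right (Commute.one_right M)

theorem apply_eq_apply_of_semiconjBy_of_commute_single [CommSemiring R] {M N N' : Matrix n n R}
    (hc : IsRegular c) (hM : IsLeftRegular M) (hcomm : Commute M (Matrix.single i j c))
    (hconj : SemiconjBy M N N') : N j i = N' j i := by
  have sandwich (P : Matrix n n R) : Matrix.single i j c * P * Matrix.single i j c
      = (c * P j i) • Matrix.single i j c := by
    rw [Matrix.single_mul_mul_single, Matrix.smul_single, smul_eq_mul]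
  have hsmul : (c * N j i) • Matrix.single i j c = (c * N' j i) • Matrix.single i j c := hM <|
    calc M * (c * N j i) • Matrix.single i j c
        = ((c * N' j i) • Matrix.single i j c) * M := by
          simpa only [sandwich] using
            ((hcomm.semiconjBy.mul_right hconj).mul_right hcomm.semiconjBy).eq
      _ = M * (c * N' j i) • Matrix.single i j c := (hcomm.smul_right _).eq.symm
  have hentry : c * N j i * c = c * N' j i * c := by
    simpa only [Matrix.smul_apply, Matrix.single_apply_same, smul_eq_mul] using
      congr_fun₂ hsmul i j
  exact hc.left (hc.right hentry)

end MatrixUnit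

theorem Bmat_eq_transvection {m i : ℕ} (hi : 1 ≤ i) (him : 2 * i ≤ m) :
    Bmat m i = Matrix.transvection ⟨2 * i - 1, by omega⟩ ⟨2 * i - 2, by omega⟩ (-1) := by
  ext p q
  simp only [Bmat, Matrix.transvection, Matrix.of_apply, Matrix.add_apply, Matrix.one_apply,
    Matrix.single_apply, Fin.ext_iff]
  split_ifs <;> first | omega | simp

theorem stmt_11_general {r : ℕ} (hr : 1 ≤ r) {M : Matrix (Fin (2 * r + 1)) (Fin (2 * r + 1)) ℂ}
    (hM : IsUnit M) (hB : Commute M (Bmat (2 * r + 1) r)) : M * U2mat r * M⁻¹ ≠ U1mat r := by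
  intro hU
  have hconj : SemiconjBy M (U2mat r) (U1mat r) := by
    rw [SemiconjBy, ← hU,
      Matrix.nonsing_inv_mul_cancel_right _ _ ((Matrix.isUnit_iff_isUnit_det M).mp hM)]
  rw [Bmat_eq_transvection hr (by omega), commute_transvection_iff] at hB
  have hentry := apply_eq_apply_of_semiconjBy_of_commute_single
    isUnit_one.neg.isRegular hM.isRegular.left hB hconj
  norm_num [U1mat, U2mat] at hentry

/-- There is no invertible `M` commuting with all `A_i, B_i` (`1 ≤ i ≤ r`) and
`C_j` (`1 ≤ j ≤ r-1`) with `M U₂ M⁻¹ = U₁`. -/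
theorem stmt_11 (r : ℕ) (hr : 1 ≤ r) :
    ¬ ∃ M : Matrix (Fin (2 * r + 1)) (Fin (2 * r + 1)) ℂ, IsUnit M ∧
      (∀ i, 1 ≤ i → i ≤ r →
        M * Amat (2 * r + 1) i = Amat (2 * r + 1) i * M ∧
        M * Bmat (2 * r + 1) i = Bmat (2 * r + 1) i * M) ∧
      (∀ j, 1 ≤ j → j ≤ r - 1 →
        M * Cmat (2 * r + 1) j = Cmat (2 * r + 1) j * M) ∧
      M * U2mat r * M⁻¹ = U1mat r := by
  rintro ⟨M, hM, hAB, -, hU⟩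
  exact stmt_11_general hr hM (hAB r hr le_rfl).2 hU
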